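/- arXiv:1711.09132 — 7 statements merged into one kernel-verified Lean document; each statement's English description precedes it below -/
import Mathlib

section
/- Let X and Y be real 2×2 matrices with Y symmetric. Then the complex 2×2 matrix Y + i·(X J Xᵀ − J) (entrywise coercion of the real matrices into ℂ) is positive semidefinite if and only if Y is positive semidefinite and det Y ≥ (1 − det X)². (This is the complete positivity condition Y + iXΩXᵀ ≥ iΩ for a single-mode Gaussian channel, in the form Y ≥ 0 and √(det Y) ≥ |1 − det X|.) -/
open Matrix Complex
open scoped ComplexOrder

/-- The one-mode symplectic form. -/
def Jmat : Matrix (Fin 2) (Fin 2) ℝ := !![0, 1; -1, 0]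

theorem aux_ineq (a d p q u v r s : ℝ) (ha : 0 ≤ a) (hd : 0 ≤ d) (h : p ^ 2 + q ^ 2 ≤ a * d) :
    0 ≤ a * (u ^ 2 + v ^ 2) + d * (r ^ 2 + s ^ 2) +
      2 * (p * (u * r + v * s) + q * (v * r - u * s)) := by
  have hA : 0 ≤ a * (u ^ 2 + v ^ 2) := by positivity
  have hD : 0 ≤ d * (r ^ 2 + s ^ 2) := by positivity
  set w := p * (u * r + v * s) + q * (v * r - u * s) with hw
  have h1 : w ^ 2 ≤ (p ^ 2 + q ^ 2) * ((u ^ 2 + v ^ 2) * (r ^ 2 + s ^ 2)) := by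
    have : (p ^ 2 + q ^ 2) * ((u ^ 2 + v ^ 2) * (r ^ 2 + s ^ 2)) - w ^ 2 =
      (p * (v * r - u * s) - q * (u * r + v * s)) ^ 2 := by rw [hw]; ring
    nlinarith [sq_nonneg (p * (v * r - u * s) - q * (u * r + v * s))]
  have h2 : (p ^ 2 + q ^ 2) * ((u ^ 2 + v ^ 2) * (r ^ 2 + s ^ 2)) ≤
      a * d * ((u ^ 2 + v ^ 2) * (r ^ 2 + s ^ 2)) := by gcongr
  have h3 : (2 * w) ^ 2 ≤ (a * (u ^ 2 + v ^ 2) + d * (r ^ 2 + s ^ 2)) ^ 2 := by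
    nlinarith [sq_nonneg (a * (u ^ 2 + v ^ 2) - d * (r ^ 2 + s ^ 2))]
  have h4 := abs_le_of_sq_le_sq' h3 (by positivity)
  linarith [h4.1]

theorem aux_psd_real (Y : Matrix (Fin 2) (Fin 2) ℝ) (hY : Y 1 0 = Y 0 1) (ha : 0 ≤ Y 0 0)
    (hd : 0 ≤ Y 1 1) (h : Y 0 1 ^ 2 ≤ Y 0 0 * Y 1 1) : Y.PosSemidef := by
  apply Matrix.PosSemidef.of_dotProduct_mulVec_nonneg
  · ext i j
    fin_cases i <;> fin_cases j <;> simp [hY]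
  · intro x
    have := aux_ineq (Y 0 0) (Y 1 1) (Y 0 1) 0 (x 0) 0 (x 1) 0 ha hd (by simpa using h)
    simp [dotProduct, Matrix.mulVec, Fin.sum_univ_two, hY]
    linarith

theorem aux_psd_complex (M : Matrix (Fin 2) (Fin 2) ℂ) (a d p q : ℝ)
    (h00 : M 0 0 = a) (h11 : M 1 1 = d) (h01 : M 0 1 = ⟨p, q⟩) (h10 : M 1 0 = ⟨p, -q⟩) :
    M.PosSemidef ↔ 0 ≤ a ∧ 0 ≤ d ∧ p ^ 2 + q ^ 2 ≤ a * d := by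
  constructor
  · intro h
    have h0 := h.diag_nonneg (i := 0)
    have h1 := h.diag_nonneg (i := 1)
    have h2 := h.det_nonneg
    rw [h00] at h0
    rw [h11] at h1
    rw [Matrix.det_fin_two, h00, h11, h01, h10, Complex.le_def] at h2
    have h2 := h2.1
    simp at h2
    exact ⟨by exact_mod_cast h0, by exact_mod_cast h1, by nlinarith⟩
  · rintro ⟨ha, hd, h⟩
    apply Matrix.PosSemidef.of_dotProduct_mulVec_nonneg
    · ext i j
      fin_cases i <;> fin_cases j <;> simp [h00, h11, h01, h10, Complex.ext_iff]
    · intro x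
      have := aux_ineq a d p q (x 0).re (x 0).im (x 1).re (x 1).im ha hd h
      rw [Complex.le_def]
      simp [dotProduct, Matrix.mulVec, Fin.sum_univ_two, h00, h11, h01, h10]
      constructor
      · linarith
      · ring

theorem single_mode_complete_positivity
    (X Y : Matrix (Fin 2) (Fin 2) ℝ) (hY : Y.IsSymm) :
    (Y.map (Complex.ofReal ·) +
        Complex.I • ((X * Jmat * Xᵀ - Jmat).map (Complex.ofReal ·))).PosSemidef ↔
      Y.PosSemidef ∧ (1 - X.det) ^ 2 ≤ Y.det := by
  have hs : Y 1 0 = Y 0 1 := hY.apply 0 1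
  rw [aux_psd_complex _ (Y 0 0) (Y 1 1) (Y 0 1) (X.det - 1)]
  · rw [Matrix.det_fin_two Y, hs]
    constructor
    · rintro ⟨ha, hd, h⟩
      exact ⟨aux_psd_real Y hs ha hd (by nlinarith [sq_nonneg (X.det - 1)]), by nlinarith⟩
    · rintro ⟨h, h'⟩
      exact ⟨h.diag_nonneg, h.diag_nonneg, by nlinarith⟩
  all_goals
    simp [Complex.ext_iff, Jmat, Matrix.mul_apply, Fin.sum_univ_two, Matrix.det_fin_two, hs]
  all_goals ring
end

section
/- Let x, y be real numbers with x ≥ 0 and y ≥ 0. Then the complex 2×2 matrix y·𝟙₂ + i·(x − 1)·J (entrywise coercion of the real matrices into ℂ) is positive semidefinite if and only if y ≥ |1 − x|. (This is the complete positivity condition for the phase covariant Gaussian channel Λ_{x,y} with X = √x·𝟙 and Y = y·𝟙.) -/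
open Matrix Complex
open scoped ComplexOrder

theorem phase_covariant_complete_positivity
    (x y : ℝ) (hx : 0 ≤ x) (hy : 0 ≤ y) :
    ((y • (1 : Matrix (Fin 2) (Fin 2) ℝ)).map (Complex.ofReal ·) +
        Complex.I • (((x - 1) • Jmat).map (Complex.ofReal ·))).PosSemidef ↔
      |1 - x| ≤ y := by
  have hq : ∀ v : Fin 2 → ℂ, star v ⬝ᵥ (((y • (1 : Matrix (Fin 2) (Fin 2) ℝ)).map (Complex.ofReal ·) +
        Complex.I • (((x - 1) • Jmat).map (Complex.ofReal ·))) *ᵥ v) =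
      (((y - (x - 1)) / 2 * (((v 0).re + (v 1).im) ^ 2 + ((v 0).im - (v 1).re) ^ 2) +
        (y + (x - 1)) / 2 * (((v 0).re - (v 1).im) ^ 2 + ((v 0).im + (v 1).re) ^ 2) : ℝ) : ℂ) := by
    intro v
    apply Complex.ext
    · simp [Jmat, Matrix.mulVec, dotProduct, Fin.sum_univ_two, Matrix.one_apply, pow_two]
      ring
    · simp [Jmat, Matrix.mulVec, dotProduct, Fin.sum_univ_two, Matrix.one_apply, pow_two]
      ring
  rw [Matrix.posSemidef_iff_dotProduct_mulVec]
  simp only [hq, Complex.zero_le_real]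
  rw [abs_le]
  constructor
  · rintro ⟨_, h⟩
    have h1 := h ![1, Complex.I]
    have h2 := h ![1, -Complex.I]
    norm_num at h1 h2
    constructor <;> linarith
  · rintro ⟨h1, h2⟩
    refine ⟨?_, fun v => ?_⟩
    · ext i j
      fin_cases i <;> fin_cases j <;> simp [Jmat] <;> ring
    · have h3 : 0 ≤ y - (x - 1) := by linarith
      have h4 : 0 ≤ y + (x - 1) := by linarith
      positivity
end

section
/- Let S be an invertible real 2m×2m matrix with S Ω Sᵀ = Ω, let ν₁, …, ν_m be positive reals with ν_j ν_k ≠ 1 for all j, k, and set V = S D Sᵀ where D is block-diagonal with 2×2 blocks ν_j·𝟙₂. Then for every real symmetric 2m×2m matrix W, the matrix L = Σ_{j,k=1}^{m} Σ_{l=0}^{3} [ tr( S⁻¹ W (Sᵀ)⁻¹ M_l^{jk} ) / ( ν_j ν_k − (−1)^l ) ] · (Sᵀ)⁻¹ M_l^{jk} S⁻¹ satisfies V L V + Ω L Ω = W. -/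
open Matrix

/-- The standard symplectic form on `ℝ^(2m)`: block-diagonal with `m` copies of
`J = !![0, 1; -1, 0]`. -/
def OmegaMat (m : ℕ) : Matrix (Fin (2 * m)) (Fin (2 * m)) ℝ :=
  Matrix.of fun i j =>
    if (j : ℕ) = (i : ℕ) + 1 ∧ (i : ℕ) % 2 = 0 then 1
    else if (i : ℕ) = (j : ℕ) + 1 ∧ (j : ℕ) % 2 = 0 then -1
    else 0

/-- The four 2×2 matrices `(1/√2)·{J, σ_z, 𝟙₂, σ_x}`. -/
noncomputable def blk : Fin 4 → Matrix (Fin 2) (Fin 2) ℝ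
  | 0 => (Real.sqrt 2)⁻¹ • !![0, 1; -1, 0]
  | 1 => (Real.sqrt 2)⁻¹ • !![1, 0; 0, -1]
  | 2 => (Real.sqrt 2)⁻¹ • !![1, 0; 0, 1]
  | 3 => (Real.sqrt 2)⁻¹ • !![0, 1; 1, 0]

/-- The matrix `M_l^{jk}`: zero except for the 2×2 block in block-position `(j,k)`,
which equals `blk l`. -/
noncomputable def Mmat (m : ℕ) (j k : Fin m) (l : Fin 4) :
    Matrix (Fin (2 * m)) (Fin (2 * m)) ℝ :=
  Matrix.of fun p q =>
    if (p : ℕ) / 2 = (j : ℕ) ∧ (q : ℕ) / 2 = (k : ℕ) then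
      blk l ⟨(p : ℕ) % 2, Nat.mod_lt _ two_pos⟩ ⟨(q : ℕ) % 2, Nat.mod_lt _ two_pos⟩
    else 0

/-- The block-diagonal matrix with 2×2 blocks `ν_j • 𝟙₂`. -/
def Dmat (m : ℕ) (ν : Fin m → ℝ) : Matrix (Fin (2 * m)) (Fin (2 * m)) ℝ :=
  Matrix.of fun p q =>
    if p = q then ν ⟨(p : ℕ) / 2, Nat.div_lt_of_lt_mul p.isLt⟩ else 0

def idx {m : ℕ} (j : Fin m) (a : Fin 2) : Fin (2 * m) := ⟨2 * j + a, by omega⟩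

def idxE (m : ℕ) : Fin m × Fin 2 ≃ Fin (2 * m) where
  toFun x := idx x.1 x.2
  invFun p := (⟨(p : ℕ) / 2, Nat.div_lt_of_lt_mul p.isLt⟩, ⟨(p : ℕ) % 2, Nat.mod_lt _ two_pos⟩)
  left_inv := by
    rintro ⟨j, a⟩
    simp only [idx, Prod.mk.injEq, Fin.ext_iff]
    omega
  right_inv := by
    intro p
    simp only [idx, Fin.ext_iff]
    omega

theorem sum_idx {m : ℕ} (f : Fin (2 * m) → ℝ) :
    ∑ p, f p = ∑ j : Fin m, (f (idx j 0) + f (idx j 1)) := by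
  rw [← (idxE m).sum_comp f, Fintype.sum_prod_type]
  simp [Fin.sum_univ_two, idxE]

theorem mat_ext {m : ℕ} {A B : Matrix (Fin (2 * m)) (Fin (2 * m)) ℝ}
    (h : ∀ j a k b, A (idx j a) (idx k b) = B (idx j a) (idx k b)) : A = B := by
  ext p q
  obtain ⟨⟨j, a⟩, rfl⟩ := (idxE m).surjective p
  obtain ⟨⟨k, b⟩, rfl⟩ := (idxE m).surjective q
  exact h j a k b

theorem Omega_idx {m : ℕ} (j k : Fin m) (a b : Fin 2) :
    OmegaMat m (idx j a) (idx k b) = if j = k then !![0, 1; -1, 0] a b else (0 : ℝ) := by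
  simp only [OmegaMat, idx, Matrix.of_apply]
  by_cases h : j = k
  · subst h
    fin_cases a <;> fin_cases b <;> simp <;> omega
  · have h2 : (j : ℕ) ≠ k := fun h' => h (Fin.ext h')
    rw [if_neg h, if_neg (by omega), if_neg (by omega)]

theorem D_idx {m : ℕ} (ν : Fin m → ℝ) (j k : Fin m) (a b : Fin 2) :
    Dmat m ν (idx j a) (idx k b) = if j = k then (if a = b then ν j else 0) else (0 : ℝ) := by
  have e : (⟨((idx j a : Fin (2*m)) : ℕ) / 2, Nat.div_lt_of_lt_mul (idx j a).isLt⟩ : Fin m) = j := by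
    simp only [idx, Fin.ext_iff]; omega
  have e2 : idx j a = idx k b ↔ j = k ∧ a = b := by
    simp only [idx, Fin.ext_iff]; omega
  simp only [Dmat, Matrix.of_apply, e, e2]
  split_ifs <;> simp_all

theorem M_idx {m : ℕ} (j' k' : Fin m) (l : Fin 4) (j k : Fin m) (a b : Fin 2) :
    Mmat m j' k' l (idx j a) (idx k b) =
      if j = j' then (if k = k' then blk l a b else 0) else (0 : ℝ) := by
  have e (j : Fin m) (a : Fin 2) : (⟨((idx j a : Fin (2*m)) : ℕ) % 2, Nat.mod_lt _ two_pos⟩ : Fin 2) = a := by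
    simp only [idx, Fin.ext_iff]; omega
  have e2 (j j' : Fin m) (a : Fin 2) : ((idx j a : Fin (2*m)) : ℕ) / 2 = j' ↔ j = j' := by
    simp only [idx, Fin.ext_iff]; omega
  simp only [Mmat, Matrix.of_apply, e, e2]
  split_ifs <;> simp_all

theorem DMD {m : ℕ} (ν : Fin m → ℝ) (j k : Fin m) (l : Fin 4) :
    Dmat m ν * Mmat m j k l * Dmat m ν = (ν j * ν k) • Mmat m j k l := by
  have h : Dmat m ν = Matrix.diagonal
      (fun p : Fin (2 * m) => ν ⟨(p : ℕ) / 2, Nat.div_lt_of_lt_mul p.isLt⟩) := by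
    ext p q; simp [Dmat, Matrix.diagonal_apply]
  have e (j : Fin m) (a : Fin 2) : (⟨((idx j a : Fin (2*m)) : ℕ) / 2, Nat.div_lt_of_lt_mul (idx j a).isLt⟩ : Fin m) = j := by
    simp only [idx, Fin.ext_iff]; omega
  rw [h]
  apply mat_ext
  intro j' a k' b
  rw [Matrix.mul_diagonal, Matrix.diagonal_mul, Matrix.smul_apply, M_idx, e, e]
  split_ifs with h1 h2
  · subst h1 h2; simp; ring
  · simp
  · simp

theorem OMO {m : ℕ} (j k : Fin m) (l : Fin 4) :
    OmegaMat m * Mmat m j k l * OmegaMat m = (-(-1 : ℝ) ^ (l : ℕ)) • Mmat m j k l := by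
  apply mat_ext
  intro j' a k' b
  simp only [Matrix.mul_apply, sum_idx, Omega_idx, M_idx, Matrix.smul_apply]
  by_cases h1 : j' = j <;> by_cases h2 : k' = k
  · subst h1 h2
    fin_cases l <;> fin_cases a <;> fin_cases b <;> simp [blk] <;> norm_num
  all_goals
    fin_cases a <;> fin_cases b <;> simp [h1, h2, Finset.sum_add_distrib]

theorem expand {m : ℕ} (X : Matrix (Fin (2 * m)) (Fin (2 * m)) ℝ) (hX : X.IsSymm) :
    ∑ j : Fin m, ∑ k : Fin m, ∑ l : Fin 4,
      (X * Mmat m j k l).trace • Mmat m j k l = X := by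
  have ht (j k : Fin m) (l : Fin 4) : (X * Mmat m j k l).trace =
      ∑ a, ∑ b, X (idx j a) (idx k b) * blk l a b := by
    simp only [Matrix.trace, Matrix.diag_apply, Matrix.mul_apply, sum_idx, M_idx]
    simp [Finset.sum_add_distrib, Fin.sum_univ_two]
    rw [hX.apply (idx k 0) (idx j 0), hX.apply (idx k 1) (idx j 0), hX.apply (idx k 0) (idx j 1),
      hX.apply (idx k 1) (idx j 1)]
  have h2 : (Real.sqrt 2)⁻¹ * (Real.sqrt 2)⁻¹ = 1 / 2 := by
    rw [← mul_inv, Real.mul_self_sqrt (by norm_num)]; norm_num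
  apply mat_ext
  intro j a k b
  simp only [Matrix.sum_apply, Matrix.smul_apply, M_idx, ht]
  rw [Finset.sum_eq_single j (by intro j' _ h; simp [Ne.symm h]) (by simp),
    Finset.sum_eq_single k (by intro j' _ h; simp [Ne.symm h]) (by simp)]
  simp only [if_true, Fin.sum_univ_four, Fin.sum_univ_two]
  fin_cases a <;> fin_cases b <;> simp [blk] <;> grind

theorem sld_solution (m : ℕ)
    (S : Matrix (Fin (2 * m)) (Fin (2 * m)) ℝ) (hS : IsUnit S.det)
    (hsymp : S * OmegaMat m * Sᵀ = OmegaMat m)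
    (ν : Fin m → ℝ) (hν : ∀ j, 0 < ν j) (hνν : ∀ j k, ν j * ν k ≠ 1)
    (W : Matrix (Fin (2 * m)) (Fin (2 * m)) ℝ) (hW : W.IsSymm)
    (V : Matrix (Fin (2 * m)) (Fin (2 * m)) ℝ) (hV : V = S * Dmat m ν * Sᵀ)
    (L : Matrix (Fin (2 * m)) (Fin (2 * m)) ℝ)
    (hL : L = ∑ j : Fin m, ∑ k : Fin m, ∑ l : Fin 4,
      ((S⁻¹ * W * (Sᵀ)⁻¹ * Mmat m j k l).trace / (ν j * ν k - (-1 : ℝ) ^ (l : ℕ))) •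
        ((Sᵀ)⁻¹ * Mmat m j k l * S⁻¹)) :
    V * L * V + OmegaMat m * L * OmegaMat m = W := by
  have hT : IsUnit (Sᵀ).det := by rwa [Matrix.det_transpose]
  have hX : (S⁻¹ * W * (Sᵀ)⁻¹).IsSymm := by
    unfold Matrix.IsSymm
    rw [Matrix.transpose_mul, Matrix.transpose_mul, hW.eq, Matrix.transpose_nonsing_inv,
      Matrix.transpose_nonsing_inv, Matrix.transpose_transpose, Matrix.mul_assoc]
  have hWX : S * (S⁻¹ * W * (Sᵀ)⁻¹) * Sᵀ = W := by
    rw [Matrix.mul_assoc S⁻¹, Matrix.mul_nonsing_inv_cancel_left _ _ hS,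
      Matrix.nonsing_inv_mul_cancel_right _ _ hT]
  have key (j k : Fin m) (l : Fin 4) :
      V * ((Sᵀ)⁻¹ * Mmat m j k l * S⁻¹) * V
        + OmegaMat m * ((Sᵀ)⁻¹ * Mmat m j k l * S⁻¹) * OmegaMat m
      = (ν j * ν k - (-1 : ℝ) ^ (l : ℕ)) • (S * Mmat m j k l * Sᵀ) := by
    have a1 : V * (Sᵀ)⁻¹ = S * Dmat m ν := by
      rw [hV, Matrix.mul_nonsing_inv_cancel_right _ _ hT]
    have a2 : S⁻¹ * V = Dmat m ν * Sᵀ := by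
      rw [hV, Matrix.mul_assoc, Matrix.nonsing_inv_mul_cancel_left _ _ hS]
    have b1 : OmegaMat m * (Sᵀ)⁻¹ = S * OmegaMat m := by
      conv_lhs => rw [← hsymp]
      rw [Matrix.mul_nonsing_inv_cancel_right _ _ hT]
    have b2 : S⁻¹ * OmegaMat m = OmegaMat m * Sᵀ := by
      conv_lhs => rw [← hsymp]
      rw [Matrix.mul_assoc, Matrix.nonsing_inv_mul_cancel_left _ _ hS]
    have c1 : V * ((Sᵀ)⁻¹ * Mmat m j k l * S⁻¹) * V
        = S * (Dmat m ν * Mmat m j k l * Dmat m ν) * Sᵀ := by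
      calc _ = (V * (Sᵀ)⁻¹) * Mmat m j k l * (S⁻¹ * V) := by simp only [Matrix.mul_assoc]
        _ = _ := by rw [a1, a2]; simp only [Matrix.mul_assoc]
    have c2 : OmegaMat m * ((Sᵀ)⁻¹ * Mmat m j k l * S⁻¹) * OmegaMat m
        = S * (OmegaMat m * Mmat m j k l * OmegaMat m) * Sᵀ := by
      calc _ = (OmegaMat m * (Sᵀ)⁻¹) * Mmat m j k l * (S⁻¹ * OmegaMat m) := by
            simp only [Matrix.mul_assoc]
        _ = _ := by rw [b1, b2]; simp only [Matrix.mul_assoc]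
    rw [c1, c2, DMD, OMO, Matrix.mul_smul, Matrix.smul_mul, Matrix.mul_smul, Matrix.smul_mul,
      ← add_smul, sub_eq_add_neg]
  have hne (j k : Fin m) (l : Fin 4) : ν j * ν k - (-1 : ℝ) ^ (l : ℕ) ≠ 0 := by
    have h1 := hνν j k
    have h2 := mul_pos (hν j) (hν k)
    rcases neg_one_pow_eq_or ℝ (l : ℕ) with h | h <;> rw [h]
    · exact sub_ne_zero.2 h1
    · linarith
  generalize S⁻¹ * W * (Sᵀ)⁻¹ = X at *
  rw [← hWX]
  conv_rhs => rw [← expand X hX]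
  rw [hL]
  simp only [Matrix.mul_sum, Matrix.sum_mul, ← Finset.sum_add_distrib]
  refine Finset.sum_congr rfl fun j _ => Finset.sum_congr rfl fun k _ =>
    Finset.sum_congr rfl fun l _ => ?_
  rw [Matrix.mul_smul, Matrix.smul_mul, Matrix.mul_smul, Matrix.smul_mul, ← smul_add, key,
    smul_smul, div_mul_cancel₀ _ (hne j k l), Matrix.mul_smul, Matrix.smul_mul]
end

section
/- Let S be an invertible real 2m×2m matrix with S Ω Sᵀ = Ω, let ν₁, …, ν_m be positive reals with ν_j ν_k ≠ 1 for all j, k, and set V = S D Sᵀ where D is block-diagonal with 2×2 blocks ν_j·𝟙₂. Then the linear map L ↦ V L V + Ω L Ω on real 2m×2m matrices is injective: if V L₁ V + Ω L₁ Ω = V L₂ V + Ω L₂ Ω then L₁ = L₂. In particular, for each real symmetric W there is at most one L with V L V + Ω L Ω = W. -/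
open Matrix

theorem Omega_sq (m : ℕ) : OmegaMat m * OmegaMat m = -1 := by
  ext i j
  have hi := i.isLt
  let p : Fin (2 * m) := ⟨if (i : ℕ) % 2 = 0 then (i : ℕ) + 1 else (i : ℕ) - 1, by split_ifs <;> omega⟩
  rw [Matrix.mul_apply, Finset.sum_eq_single p]
  · simp only [OmegaMat, Matrix.of_apply, Matrix.neg_apply, Matrix.one_apply, p, Fin.ext_iff]
    split_ifs <;> first | (exfalso; omega) | norm_num
  · intro b _ hb
    have hb' : (b : ℕ) ≠ (p : ℕ) := fun h => hb (Fin.ext h)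
    simp only [p] at hb'
    have : OmegaMat m i b = 0 := by
      simp only [OmegaMat, Matrix.of_apply]
      split_ifs at hb' ⊢ <;> first | rfl | (exfalso; omega)
    rw [this, zero_mul]
  · simp

theorem Dmat_eq (m : ℕ) (ν : Fin m → ℝ) : Dmat m ν =
    Matrix.diagonal fun p : Fin (2 * m) => ν ⟨(p : ℕ) / 2, Nat.div_lt_of_lt_mul p.isLt⟩ := by
  ext i j
  simp [Dmat, Matrix.diagonal_apply]

theorem Omega_comm (m : ℕ) (ν : Fin m → ℝ) :
    OmegaMat m * Dmat m ν = Dmat m ν * OmegaMat m := by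
  rw [Dmat_eq]
  ext i j
  rw [Matrix.mul_diagonal, Matrix.diagonal_mul]
  by_cases h : (i : ℕ) / 2 = (j : ℕ) / 2
  · simp only [h]
    ring
  · have : OmegaMat m i j = 0 := by
      simp only [OmegaMat, Matrix.of_apply]
      split_ifs <;> first | rfl | (exfalso; omega)
    simp [this]

theorem sld_uniqueness (m : ℕ)
    (S : Matrix (Fin (2 * m)) (Fin (2 * m)) ℝ) (hS : IsUnit S.det)
    (hsymp : S * OmegaMat m * Sᵀ = OmegaMat m)
    (ν : Fin m → ℝ) (hν : ∀ j, 0 < ν j) (hνν : ∀ j k, ν j * ν k ≠ 1)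
    (V : Matrix (Fin (2 * m)) (Fin (2 * m)) ℝ) (hV : V = S * Dmat m ν * Sᵀ)
    (L₁ L₂ : Matrix (Fin (2 * m)) (Fin (2 * m)) ℝ)
    (h : V * L₁ * V + OmegaMat m * L₁ * OmegaMat m
        = V * L₂ * V + OmegaMat m * L₂ * OmegaMat m) :
    L₁ = L₂ := by
  have hX : V * (L₁ - L₂) * V + OmegaMat m * (L₁ - L₂) * OmegaMat m = 0 := by
    have := sub_eq_zero.mpr h
    rw [← this]
    noncomm_ring
  have hSu : IsUnit S := (Matrix.isUnit_iff_isUnit_det S).mpr hS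
  have hSt : IsUnit Sᵀ := (Matrix.isUnit_iff_isUnit_det _).mpr (by rwa [Matrix.det_transpose])
  rw [← sub_eq_zero]
  generalize L₁ - L₂ = X at hX
  have hO := Omega_sq m
  have hC := Omega_comm m ν
  obtain ⟨K, hK⟩ : ∃ K, K = Sᵀ * X * S := ⟨_, rfl⟩
  have h1 : S * (Dmat m ν * K * Dmat m ν + OmegaMat m * K * OmegaMat m) * Sᵀ = 0 := by
    rw [← hX, hV, hK]
    conv_rhs => rw [← hsymp]
    noncomm_ring
  have h2 : Dmat m ν * K * Dmat m ν + OmegaMat m * K * OmegaMat m = 0 := by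
    have := hSt.mul_left_eq_zero.mp h1
    exact hSu.mul_right_eq_zero.mp this
  have h3 : Dmat m ν * K * Dmat m ν = - (OmegaMat m * K * OmegaMat m) :=
    eq_neg_of_add_eq_zero_left h2
  have h4 : Dmat m ν * (Dmat m ν * K * Dmat m ν) * Dmat m ν = K := by
    calc Dmat m ν * (Dmat m ν * K * Dmat m ν) * Dmat m ν
        = - ((Dmat m ν * OmegaMat m) * K * (OmegaMat m * Dmat m ν)) := by
          rw [h3]; noncomm_ring
      _ = - (OmegaMat m * (Dmat m ν * K * Dmat m ν) * OmegaMat m) := by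
          rw [← hC]
          conv_lhs => arg 1; arg 2; rw [hC]
          noncomm_ring
      _ = (OmegaMat m * OmegaMat m) * K * (OmegaMat m * OmegaMat m) := by
          rw [h3]; noncomm_ring
      _ = K := by rw [hO]; simp
  have hK0 : K = 0 := by
    ext i j
    have h5 := congrFun (congrFun h4 i) j
    rw [Dmat_eq] at h5
    simp only [Matrix.mul_diagonal, Matrix.diagonal_mul] at h5
    generalize ha : (⟨(i : ℕ) / 2, Nat.div_lt_of_lt_mul i.isLt⟩ : Fin m) = a at h5
    generalize hb : (⟨(j : ℕ) / 2, Nat.div_lt_of_lt_mul j.isLt⟩ : Fin m) = b at h5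
    have h6 : (ν a * ν b - 1) * ((ν a * ν b + 1) * K i j) = 0 := by linear_combination h5
    have h7 := mul_pos (hν a) (hν b)
    rcases mul_eq_zero.mp h6 with h | h
    · exact absurd (sub_eq_zero.mp h) (hνν a b)
    · rcases mul_eq_zero.mp h with h | h
      · linarith
      · simpa using h
  rw [hK0] at hK
  have := hSu.mul_left_eq_zero.mp hK.symm
  exact hSt.mul_right_eq_zero.mp this
end

section
/- In the two-mode noisy interferometry setting, any symmetric L_φ with V L_φ V + Ω L_φ Ω = ∂_φ V satisfies ℱ_{φφ} := (1/2)·tr( (∂_φ V) · L_φ ) + 2·(∂_φ d)ᵀ V⁻¹ (∂_φ d) = 2 a² x ( x·sinh(2r) + x·cosh(2r) + y ) / ( 2 x y cosh(2r) + x² + y² ). -/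
open Matrix

noncomputable section

/-- The standard symplectic form on two modes (4×4). -/
def Omega4 : Matrix (Fin 4) (Fin 4) ℝ :=
  !![0, 1, 0, 0; -1, 0, 0, 0; 0, 0, 0, 1; 0, 0, -1, 0]

/-- Covariance matrix of the two-mode squeezed input with squeezing parameter `r`. -/
def V0 (r : ℝ) : Matrix (Fin 4) (Fin 4) ℝ :=
  !![Real.cosh (2*r), 0, Real.sinh (2*r), 0;
     0, Real.cosh (2*r), 0, -Real.sinh (2*r);
     Real.sinh (2*r), 0, Real.cosh (2*r), 0;
     0, -Real.sinh (2*r), 0, Real.cosh (2*r)]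

/-- Input displacement `√2·(0, a, 0, a)ᵀ` of the optimal probe. -/
def d0 (a : ℝ) : Fin 4 → ℝ := ![0, Real.sqrt 2 * a, 0, Real.sqrt 2 * a]

/-- Phase rotations by `±φ/2` on the two modes. -/
def Sphase (φ : ℝ) : Matrix (Fin 4) (Fin 4) ℝ :=
  !![Real.cos (φ/2), Real.sin (φ/2), 0, 0;
     -Real.sin (φ/2), Real.cos (φ/2), 0, 0;
     0, 0, Real.cos (φ/2), -Real.sin (φ/2);
     0, 0, Real.sin (φ/2), Real.cos (φ/2)]

/-- Evolved covariance matrix `x·S_φ V₀ S_φᵀ + y·𝟙₄`. -/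
def Vm (r φ x y : ℝ) : Matrix (Fin 4) (Fin 4) ℝ :=
  x • (Sphase φ * V0 r * (Sphase φ)ᵀ) + y • (1 : Matrix (Fin 4) (Fin 4) ℝ)

/-- Evolved displacement `√x·S_φ d₀`. -/
def dm (a φ x : ℝ) : Fin 4 → ℝ := Real.sqrt x • (Sphase φ).mulVec (d0 a)

/-- Entrywise partial derivative of `Vm` with respect to `φ`. -/
def dVdphi (r φ x y : ℝ) : Matrix (Fin 4) (Fin 4) ℝ :=
  Matrix.of fun i j => deriv (fun t => Vm r t x y i j) φ

/-- Entrywise partial derivative of `Vm` with respect to `x`. -/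
def dVdx (r φ x y : ℝ) : Matrix (Fin 4) (Fin 4) ℝ :=
  Matrix.of fun i j => deriv (fun t => Vm r φ t y i j) x

/-- Entrywise partial derivative of `Vm` with respect to `y`. -/
def dVdy (r φ x y : ℝ) : Matrix (Fin 4) (Fin 4) ℝ :=
  Matrix.of fun i j => deriv (fun t => Vm r φ x t i j) y

/-- Entrywise partial derivative of `dm` with respect to `φ`. -/
def ddphi (a φ x : ℝ) : Fin 4 → ℝ := fun i => deriv (fun t => dm a t x i) φ

/-- Entrywise partial derivative of `dm` with respect to `x`. -/
def ddx (a φ x : ℝ) : Fin 4 → ℝ := fun i => deriv (fun t => dm a φ t i) x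

/-- Entrywise partial derivative of `dm` with respect to `y` (the displacement does
not depend on `y`). -/
def ddy (a φ x y : ℝ) : Fin 4 → ℝ := fun i => deriv (fun _t : ℝ => dm a φ x i) y

theorem S_V0 (r φ : ℝ) : Sphase φ * V0 r * (Sphase φ)ᵀ = V0 r := by
  have h := Real.sin_sq_add_cos_sq (φ/2)
  ext i j
  simp only [Matrix.mul_apply, Matrix.transpose_apply, Fin.sum_univ_four]
  fin_cases i <;> fin_cases j <;>
    simp [Sphase, V0] <;>
    first
    | ring1
    | linear_combination (Real.cosh (2*r)) * h
    | linear_combination (Real.sinh (2*r)) * h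
    | linear_combination (-Real.sinh (2*r)) * h

theorem Vm_eq (r φ x y : ℝ) : Vm r φ x y =
    !![x * Real.cosh (2*r) + y, 0, x * Real.sinh (2*r), 0;
     0, x * Real.cosh (2*r) + y, 0, -(x * Real.sinh (2*r));
     x * Real.sinh (2*r), 0, x * Real.cosh (2*r) + y, 0;
     0, -(x * Real.sinh (2*r)), 0, x * Real.cosh (2*r) + y] := by
  rw [Vm, S_V0]
  ext i j
  fin_cases i <;> fin_cases j <;> simp [V0]

theorem dVdphi_eq (r φ x y : ℝ) : dVdphi r φ x y = 0 := by
  ext i j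
  simp only [dVdphi, Vm_eq, Matrix.of_apply, deriv_const, Matrix.zero_apply]

theorem ddphi_eq (a φ x : ℝ) : ddphi a φ x =
    (Real.sqrt x * (Real.sqrt 2 * a) / 2) •
      ![Real.cos (φ/2), -Real.sin (φ/2), -Real.cos (φ/2), -Real.sin (φ/2)] := by
  have hs : HasDerivAt (fun t : ℝ => Real.sin (t/2)) (Real.cos (φ/2) * (1/2)) φ :=
    ((hasDerivAt_id φ).div_const 2).sin
  have hc : HasDerivAt (fun t : ℝ => Real.cos (t/2)) (-Real.sin (φ/2) * (1/2)) φ :=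
    ((hasDerivAt_id φ).div_const 2).cos
  have e : ∀ t, dm a t x = (Real.sqrt x * (Real.sqrt 2 * a)) •
      ![Real.sin (t/2), Real.cos (t/2), -Real.sin (t/2), Real.cos (t/2)] := by
    intro t
    ext i
    fin_cases i <;>
      simp [dm, Sphase, d0, Matrix.mulVec, dotProduct, Fin.sum_univ_four] <;> ring
  ext i
  simp only [ddphi, e]
  fin_cases i
  · refine Eq.trans (hs.const_mul _).deriv ?_
    simp; ring
  · refine Eq.trans (hc.const_mul _).deriv ?_
    simp; ring
  · refine Eq.trans (hs.neg.const_mul _).deriv ?_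
    simp; ring
  · refine Eq.trans (hc.const_mul _).deriv ?_
    simp; ring

theorem Vm_inv (r φ x y : ℝ) (hD : 2 * x * y * Real.cosh (2*r) + x^2 + y^2 ≠ 0) :
    (Vm r φ x y)⁻¹ = (2 * x * y * Real.cosh (2*r) + x^2 + y^2)⁻¹ •
    !![x * Real.cosh (2*r) + y, 0, -(x * Real.sinh (2*r)), 0;
     0, x * Real.cosh (2*r) + y, 0, x * Real.sinh (2*r);
     -(x * Real.sinh (2*r)), 0, x * Real.cosh (2*r) + y, 0;
     0, x * Real.sinh (2*r), 0, x * Real.cosh (2*r) + y] := by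
  have h := Real.cosh_sq (2*r)
  apply Matrix.inv_eq_right_inv
  rw [Vm_eq, Matrix.mul_smul, inv_smul_eq_iff₀ hD]
  ext i j
  fin_cases i <;> fin_cases j <;>
    simp [Matrix.mul_apply, Fin.sum_univ_four] <;>
    first
    | ring1
    | linear_combination x^2 * h

theorem qfi_phi_phi (r a φ x y : ℝ) (hr : 0 ≤ r) (hx : 0 < x) (hy : |1 - x| < y)
    (L : Matrix (Fin 4) (Fin 4) ℝ) (hLsymm : L.IsSymm)
    (hL : Vm r φ x y * L * Vm r φ x y + Omega4 * L * Omega4 = dVdphi r φ x y) :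
    (1/2) * (dVdphi r φ x y * L).trace
      + 2 * (ddphi a φ x ⬝ᵥ (Vm r φ x y)⁻¹.mulVec (ddphi a φ x)) =
    2 * a^2 * x * (x * Real.sinh (2*r) + x * Real.cosh (2*r) + y)
      / (2 * x * y * Real.cosh (2*r) + x^2 + y^2) := by
  have hy0 : 0 < y := lt_of_le_of_lt (abs_nonneg _) hy
  have hc := Real.cosh_pos (2*r)
  have hD : 2 * x * y * Real.cosh (2*r) + x^2 + y^2 ≠ 0 := by positivity
  have h := Real.sin_sq_add_cos_sq (φ/2)
  rw [dVdphi_eq, Vm_inv r φ x y hD, ddphi_eq, Matrix.smul_mulVec, Matrix.mulVec_smul,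
    dotProduct_smul, dotProduct_smul, smul_dotProduct]
  have h1 : Real.sqrt x ^ 2 = x := Real.sq_sqrt hx.le
  have h2 : Real.sqrt 2 ^ 2 = 2 := Real.sq_sqrt (by norm_num)
  have key : (![Real.cos (φ/2), -Real.sin (φ/2), -Real.cos (φ/2), -Real.sin (φ/2)] ⬝ᵥ
    !![x * Real.cosh (2*r) + y, 0, -(x * Real.sinh (2*r)), 0;
     0, x * Real.cosh (2*r) + y, 0, x * Real.sinh (2*r);
     -(x * Real.sinh (2*r)), 0, x * Real.cosh (2*r) + y, 0;
     0, x * Real.sinh (2*r), 0, x * Real.cosh (2*r) + y].mulVec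
      ![Real.cos (φ/2), -Real.sin (φ/2), -Real.cos (φ/2), -Real.sin (φ/2)]) =
      2 * (x * Real.sinh (2*r) + x * Real.cosh (2*r) + y) := by
    simp [Matrix.mulVec, dotProduct, Fin.sum_univ_four]
    linear_combination 2 * (x * Real.sinh (2*r) + x * Real.cosh (2*r) + y) * h
  have hk : (Real.sqrt x * (Real.sqrt 2 * a) / 2) * (Real.sqrt x * (Real.sqrt 2 * a) / 2)
      = x * a^2 / 2 := by
    calc _ = Real.sqrt x ^ 2 * Real.sqrt 2 ^ 2 * a^2 / 4 := by ring
      _ = _ := by rw [h1, h2]; ring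
  rw [key]
  simp only [smul_eq_mul, Matrix.zero_mul, Matrix.trace_zero, mul_zero, zero_add]
  rw [div_eq_mul_inv]
  linear_combination (4 * (2 * x * y * Real.cosh (2*r) + x^2 + y^2)⁻¹ *
    (x * Real.sinh (2*r) + x * Real.cosh (2*r) + y)) * hk
end
end

section
/- In the two-mode noisy interferometry setting, any symmetric L_y with V L_y V + Ω L_y Ω = ∂_y V (note ∂_y V = 𝟙₄ and ∂_y d = 0) satisfies ℱ_{yy} := (1/2)·tr( (∂_y V) · L_y ) = 2·( x² cosh(4r) + 2 x y cosh(2r) + y² + 1 ) / ( 2 x y·[ 2 cosh(2r)·(x² + y²) + x y cosh(4r) ] + x⁴ + 4 x² y² + y⁴ − 1 ). -/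
open Matrix

noncomputable section

theorem qfi_core (c s : ℝ) (M : Matrix (Fin 4) (Fin 4) ℝ)
    (h : !![c, 0, s, 0; 0, c, 0, -s; s, 0, c, 0; 0, -s, 0, c] * M *
      !![c, 0, s, 0; 0, c, 0, -s; s, 0, c, 0; 0, -s, 0, c] + Omega4 * M * Omega4 = 1) :
    ((c^2 - s^2)^2 - 1) * M.trace = 4 * (c^2 + s^2 + 1) := by
  have e := fun i j => congrFun (congrFun h i) j
  have e00 := e 0 0
  have e11 := e 1 1
  have e22 := e 2 2
  have e33 := e 3 3
  have e02 := e 0 2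
  have e20 := e 2 0
  have e13 := e 1 3
  have e31 := e 3 1
  clear e h
  simp only [Omega4, Matrix.add_apply, Matrix.mul_apply, Fin.sum_univ_four] at e00 e11 e22 e33 e02 e20 e13 e31
  simp at e00 e11 e22 e33 e02 e20 e13 e31
  simp only [Matrix.trace, Matrix.diag, Fin.sum_univ_four]
  linear_combination (c^2+s^2+1) * (e00 + e11 + e22 + e33) - 2*c*s*(e02+e20-e13-e31)

theorem dVdy_eq_one (r φ x y : ℝ) : dVdy r φ x y = 1 := by
  ext i j
  simp [dVdy, Vm]

theorem Sphase_left (φ : ℝ) : (Sphase φ)ᵀ * Sphase φ = 1 := by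
  have h := Real.sin_sq_add_cos_sq (φ/2)
  ext i j
  fin_cases i <;> fin_cases j <;>
    simp [Sphase, Matrix.mul_apply, Fin.sum_univ_four] <;> linarith

theorem Sphase_Omega (φ : ℝ) : Sphase φ * Omega4 = Omega4 * Sphase φ := by
  ext i j
  fin_cases i <;> fin_cases j <;>
    simp [Sphase, Omega4, Matrix.mul_apply, Fin.sum_univ_four]

theorem SphaseT_Omega (φ : ℝ) : (Sphase φ)ᵀ * Omega4 = Omega4 * (Sphase φ)ᵀ := by
  ext i j
  fin_cases i <;> fin_cases j <;>
    simp [Sphase, Omega4, Matrix.mul_apply, Fin.sum_univ_four]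

theorem qfi_y_y (r a φ x y : ℝ) (hr : 0 ≤ r) (hx : 0 < x) (hy : |1 - x| < y)
    (L : Matrix (Fin 4) (Fin 4) ℝ) (hLsymm : L.IsSymm)
    (hL : Vm r φ x y * L * Vm r φ x y + Omega4 * L * Omega4 = dVdy r φ x y) :
    (1/2) * (dVdy r φ x y * L).trace =
    2 * (x^2 * Real.cosh (4*r) + 2 * x * y * Real.cosh (2*r) + y^2 + 1)
      / (2 * x * y * (2 * Real.cosh (2*r) * (x^2 + y^2) + x * y * Real.cosh (4*r))
          + x^4 + 4 * x^2 * y^2 + y^4 - 1) := by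
  rw [dVdy_eq_one] at hL ⊢
  rw [one_mul]
  set S := Sphase φ with hS
  have h1 : Sᵀ * S = 1 := Sphase_left φ
  have h2 : S * Sᵀ = 1 := mul_eq_one_comm.mp h1
  have hW : Sᵀ * Vm r φ x y = (x • V0 r + y • (1 : Matrix (Fin 4) (Fin 4) ℝ)) * Sᵀ := by
    rw [Vm, ← hS, mul_add, add_mul, mul_smul_comm, mul_assoc, ← mul_assoc, h1]
    simp
  have hW' : Vm r φ x y * S = S * (x • V0 r + y • (1 : Matrix (Fin 4) (Fin 4) ℝ)) := by
    rw [Vm, ← hS, mul_add, add_mul, smul_mul_assoc, mul_assoc, h1]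
    simp
  set W := x • V0 r + y • (1 : Matrix (Fin 4) (Fin 4) ℝ) with hWd
  have hM : W * (Sᵀ * L * S) * W + Omega4 * (Sᵀ * L * S) * Omega4 = 1 := by
    have h3 : Sᵀ * (Vm r φ x y * L * Vm r φ x y + Omega4 * L * Omega4) * S = 1 := by
      rw [hL, mul_one, h1]
    rw [← h3]
    calc _ = (W * Sᵀ) * L * (S * W) + (Omega4 * Sᵀ) * L * (S * Omega4) := by
          simp only [mul_assoc]
      _ = (Sᵀ * Vm r φ x y) * L * (Vm r φ x y * S) + (Sᵀ * Omega4) * L * (Omega4 * S) := by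
          rw [hW, hW', SphaseT_Omega, hS, Sphase_Omega]
      _ = _ := by simp only [mul_assoc, mul_add, add_mul]
  have htr : (Sᵀ * L * S).trace = L.trace := by
    rw [Matrix.trace_mul_comm, ← mul_assoc, h2, one_mul]
  have hWe : W = !![x * Real.cosh (2*r) + y, 0, x * Real.sinh (2*r), 0;
      0, x * Real.cosh (2*r) + y, 0, -(x * Real.sinh (2*r));
      x * Real.sinh (2*r), 0, x * Real.cosh (2*r) + y, 0;
      0, -(x * Real.sinh (2*r)), 0, x * Real.cosh (2*r) + y] := by
    rw [hWd]
    ext i j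
    fin_cases i <;> fin_cases j <;> simp [V0]
  rw [hWe] at hM
  have key := qfi_core _ _ _ hM
  rw [htr] at key
  have h4 : Real.cosh (4*r) = Real.cosh (2*r)^2 + Real.sinh (2*r)^2 := by
    rw [← Real.cosh_two_mul]; ring_nf
  have hcs := Real.cosh_sq (2*r)
  have hc1 := Real.one_le_cosh (2*r)
  rw [h4]
  generalize Real.cosh (2*r) = C at *
  generalize Real.sinh (2*r) = s at *
  have hy0 : 0 < y := lt_of_le_of_lt (abs_nonneg _) hy
  have hxy : 1 < x + y := by have := le_abs_self (1 - x); linarith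
  have hu : (x * C + y)^2 - (x * s)^2 = x^2 + 2*x*y*C + y^2 := by
    linear_combination x^2 * hcs
  have hu1 : 1 < x^2 + 2*x*y*C + y^2 := by
    nlinarith [mul_nonneg (mul_pos hx hy0).le (sub_nonneg.2 hc1)]
  rw [hu] at key
  have hD : 2 * x * y * (2 * C * (x^2 + y^2) + x * y * (C^2 + s^2))
          + x^4 + 4 * x^2 * y^2 + y^4 - 1 = (x^2 + 2*x*y*C + y^2)^2 - 1 := by
    linear_combination -2*x^2*y^2 * hcs
  have hpos : 0 < (x^2 + 2*x*y*C + y^2)^2 - 1 := by nlinarith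
  rw [hD, eq_div_iff hpos.ne']
  linear_combination key / 2
end
end

section
/- High-squeezing asymptotics of the noise-parameter Fisher information: fix reals x > 0 and y > |1 − x|, and let D(r) = 2xy·[ 2 cosh(2r)·(x² + y²) + x y cosh(4r) ] + x⁴ + 4x²y² + y⁴ − 1. Then, as r → ∞: (a) 2·( x² cosh(4r) + 2 x y cosh(2r) + y² + 1 ) / D(r) tends to 1/y²; (b) ( 2·(x² + y² + 1)·cosh(2r) + 4 x y ) / D(r) tends to 0; and (c) for any fixed a ∈ ℝ, 2 a² x ( x sinh(2r) + x cosh(2r) + y ) / ( 2 x y cosh(2r) + x² + y² ) tends to 2 a² x / y. (These are the limiting entries ℱ_{yy} → 1/y², ℱ_{xy} → 0 and the coefficient of ℱ_{φφ} in the high-energy regime, showing the parameters become asymptotically statistically independent.) -/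
open Filter

theorem qfi_high_squeezing_asymptotics (x y a : ℝ) (hx : 0 < x) (hy : |1 - x| < y)
    (D : ℝ → ℝ)
    (hD : ∀ r, D r = 2 * x * y * (2 * Real.cosh (2*r) * (x^2 + y^2)
        + x * y * Real.cosh (4*r)) + x^4 + 4 * x^2 * y^2 + y^4 - 1) :
    Tendsto (fun r : ℝ =>
        2 * (x^2 * Real.cosh (4*r) + 2 * x * y * Real.cosh (2*r) + y^2 + 1) / D r)
      atTop (nhds (1 / y^2)) ∧
    Tendsto (fun r : ℝ =>
        (2 * (x^2 + y^2 + 1) * Real.cosh (2*r) + 4 * x * y) / D r)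
      atTop (nhds 0) ∧
    Tendsto (fun r : ℝ =>
        2 * a^2 * x * (x * Real.sinh (2*r) + x * Real.cosh (2*r) + y)
          / (2 * x * y * Real.cosh (2*r) + x^2 + y^2))
      atTop (nhds (2 * a^2 * x / y)) := by
  have hy0 : 0 < y := lt_of_le_of_lt (abs_nonneg _) hy
  have hu : Tendsto (fun r : ℝ => Real.exp (-(2*r))) atTop (nhds 0) :=
    Real.tendsto_exp_neg_atTop_nhds_zero.comp (tendsto_id.const_mul_atTop (by norm_num))
  have key : ∀ (P Q : ℝ → ℝ) (f g : ℝ → ℝ) (l : ℝ), Continuous P → Continuous Q → Q 0 ≠ 0 →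
      P 0 / Q 0 = l →
      (∀ r, f r * (2 * Real.exp (-(2*r))^2) = P (Real.exp (-(2*r)))) →
      (∀ r, g r * (2 * Real.exp (-(2*r))^2) = Q (Real.exp (-(2*r)))) →
      Tendsto (fun r => f r / g r) atTop (nhds l) := by
    intro P Q f g l hP hQ h0 hl hf hg
    have h1 := ((hP.tendsto 0).comp hu).div ((hQ.tendsto 0).comp hu) h0
    rw [hl] at h1
    refine h1.congr fun r => ?_
    have : (2 * Real.exp (-(2*r))^2) ≠ 0 := by positivity
    simp only [Pi.div_apply, Function.comp]
    rw [← hf, ← hg, mul_div_mul_right _ _ this]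
  have e1 : ∀ r : ℝ, Real.exp (2*r) * Real.exp (-(2*r)) = 1 := fun r => by
    rw [← Real.exp_add]; simp
  have c2 : ∀ r : ℝ, Real.cosh (2*r) * (2 * Real.exp (-(2*r))^2)
      = Real.exp (-(2*r)) + Real.exp (-(2*r))^3 := fun r => by
    rw [Real.cosh_eq]; linear_combination Real.exp (-(2*r)) * e1 r
  have s2 : ∀ r : ℝ, Real.sinh (2*r) * (2 * Real.exp (-(2*r))^2)
      = Real.exp (-(2*r)) - Real.exp (-(2*r))^3 := fun r => by
    rw [Real.sinh_eq]; linear_combination Real.exp (-(2*r)) * e1 r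
  have c4 : ∀ r : ℝ, Real.cosh (4*r) * (2 * Real.exp (-(2*r))^2)
      = 1 + Real.exp (-(2*r))^4 := fun r => by
    have h1 : Real.exp (4*r) = Real.exp (2*r)^2 := by rw [← Real.exp_nat_mul]; congr 1; push_cast; ring
    have h2 : Real.exp (-(4*r)) = Real.exp (-(2*r))^2 := by
      rw [← Real.exp_nat_mul]; congr 1; push_cast; ring
    rw [Real.cosh_eq, h1, h2]
    linear_combination (Real.exp (2*r) * Real.exp (-(2*r)) + 1) * e1 r
  have hDu : ∀ r, D r * (2 * Real.exp (-(2*r))^2) =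
      (fun u : ℝ => 2*x*y*(2*(u+u^3)*(x^2+y^2) + x*y*(1+u^4))
        + 2*u^2*(x^4 + 4 * x^2 * y^2 + y^4 - 1)) (Real.exp (-(2*r))) := fun r => by
    rw [hD]
    linear_combination 2*x*y*2*(x^2+y^2) * c2 r + 2*x*y*x*y * c4 r
  refine ⟨?_, ?_, ?_⟩
  · refine key (fun u => 2*(x^2*(1+u^4) + 2*x*y*(u+u^3) + 2*u^2*(y^2+1)))
      (fun u : ℝ => 2*x*y*(2*(u+u^3)*(x^2+y^2) + x*y*(1+u^4))
        + 2*u^2*(x^4 + 4 * x^2 * y^2 + y^4 - 1)) _ _ _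
      (by fun_prop) ?_ ?_ ?_ ?_ hDu
    · fun_prop
    · simp; exact ⟨hx.ne', hy0.ne'⟩
    · simp; field_simp
    · intro r
      linear_combination 2*x^2 * c4 r + 4*x*y * c2 r
  · refine key (fun u => 2*(x^2+y^2+1)*(u+u^3) + 8*x*y*u^2)
      (fun u : ℝ => 2*x*y*(2*(u+u^3)*(x^2+y^2) + x*y*(1+u^4))
        + 2*u^2*(x^4 + 4 * x^2 * y^2 + y^4 - 1)) _ _ _
      (by fun_prop) ?_ ?_ ?_ ?_ hDu
    · fun_prop
    · simp; exact ⟨hx.ne', hy0.ne'⟩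
    · simp
    · intro r
      linear_combination 2*(x^2+y^2+1) * c2 r
  · have hu1 : ∀ r : ℝ, Real.exp (-(2*r)) ≠ 0 := fun r => (Real.exp_pos _).ne'
    have hP : Continuous (fun u : ℝ => 2*a^2*x*(2*x + 2*y*u)) := by fun_prop
    have hQ : Continuous (fun u : ℝ => 2*x*y*(1+u^2) + 2*u*(x^2+y^2)) := by fun_prop
    have h1 := ((hP.tendsto 0).comp hu).div ((hQ.tendsto 0).comp hu)
      (by simp; exact ⟨hx.ne', hy0.ne'⟩)
    have hl : (2*a^2*x*(2*x + 2*y*0)) / (2*x*y*(1+0^2) + 2*0*(x^2+y^2)) = 2 * a^2 * x / y := by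
      simp; field_simp
    rw [hl] at h1
    refine h1.congr fun r => ?_
    simp only [Pi.div_apply, Function.comp]
    rw [← mul_div_mul_right _ (2 * x * y * Real.cosh (2*r) + x^2 + y^2)
      (mul_ne_zero two_ne_zero (hu1 r))]
    rw [Real.cosh_eq, Real.sinh_eq]
    congr 1
    · linear_combination (-4*a^2*x^2) * e1 r
    · linear_combination (-2*x*y) * e1 r
end
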